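/- Let y(k) = C A^k x0 be the nominal output, let N ≥ ν and T ≥ N + μ − 1, and let S be any matrix with orthonormal columns whose column space equals the column space of the Hankel matrix Y_{N,T}. Define w(k) = S^⊤ (y(k), …, y(k+N−1)) for all k ∈ ℕ, and let W = [w(0), …, w(T−N)] and W⃗ = [w(1), …, w(T−N+1)]. Then there exists a matrix M with M W = W⃗ (so the minimum over M of the Frobenius norm ‖W⃗ − M W‖_F equals 0), and every matrix M satisfying M W = W⃗ also satisfies w(k+1) = M w(k) for all k ∈ ℕ. -/

import Mathlib

open Matrix

noncomputable section

/-- The observability matrix `O_N = [C; CA; …; CA^{N-1}]`, with block rows indexed by `Fin N`. -/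
def obsMat {n p : ℕ} (A : Matrix (Fin n) (Fin n) ℝ) (C : Matrix (Fin p) (Fin n) ℝ)
    (N : ℕ) : Matrix (Fin N × Fin p) (Fin n) ℝ :=
  fun ir j => (C * A ^ (ir.1 : ℕ)) ir.2 j

/-- The observability index `ν = min {N : Rank O_N = Rank O_{N+j} for all j}`. -/
def obsIndex {n p : ℕ} (A : Matrix (Fin n) (Fin n) ℝ) (C : Matrix (Fin p) (Fin n) ℝ) : ℕ :=
  sInf {N : ℕ | ∀ j : ℕ, (obsMat A C (N + j)).rank = (obsMat A C N).rank}

/-- The Krylov/excitability matrix `E_N(x) = [x, Ax, …, A^{N-1} x]`. -/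
def excMat {n : ℕ} (A : Matrix (Fin n) (Fin n) ℝ) (x : Fin n → ℝ) (N : ℕ) :
    Matrix (Fin n) (Fin N) ℝ :=
  fun i k => (A ^ (k : ℕ)).mulVec x i

/-- The excitability index at `x`: `μ(x) = min {i : Rank E_i(x) = Rank E_{i+j}(x) for all j}`. -/
def excIndexAt {n : ℕ} (A : Matrix (Fin n) (Fin n) ℝ) (x : Fin n → ℝ) : ℕ :=
  sInf {i : ℕ | ∀ j : ℕ, (excMat A x (i + j)).rank = (excMat A x i).rank}

/-- The excitability index `μ = max_{x ∈ ℝⁿ} μ(x)`. -/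
def excIndex {n : ℕ} (A : Matrix (Fin n) (Fin n) ℝ) : ℕ :=
  sSup (Set.range (excIndexAt A))

/-- The Hankel matrix `Y_{N,T}` of the nominal output `y(k) = C A^k x0`; its `j`-th column is
the stacked vector `(y(j), …, y(j+N-1))`. -/
def hankelMat {n p : ℕ} (A : Matrix (Fin n) (Fin n) ℝ) (C : Matrix (Fin p) (Fin n) ℝ)
    (x0 : Fin n → ℝ) (N T : ℕ) : Matrix (Fin N × Fin p) (Fin (T - N + 1)) ℝ :=
  fun ir j => (C * A ^ ((j : ℕ) + (ir.1 : ℕ))).mulVec x0 ir.2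

/-- The Hankel information `Γ({y(k)}) = sup {Rank Y_{N,T} : N ≤ T}`. -/
def hankelInfo {n p : ℕ} (A : Matrix (Fin n) (Fin n) ℝ) (C : Matrix (Fin p) (Fin n) ℝ)
    (x0 : Fin n → ℝ) : ℕ :=
  sSup {r : ℕ | ∃ N T : ℕ, N ≤ T ∧ r = (hankelMat A C x0 N T).rank}

/-- The stacked nominal output vector `y_{k:k+N-1} = (y(k), …, y(k+N-1))`. -/
def nomStack {n p : ℕ} (A : Matrix (Fin n) (Fin n) ℝ) (C : Matrix (Fin p) (Fin n) ℝ)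
    (x0 : Fin n → ℝ) (N k : ℕ) : Fin N × Fin p → ℝ :=
  fun ir => (C * A ^ (k + (ir.1 : ℕ))).mulVec x0 ir.2

/-!
Since `y_{k:k+N-1} = O_N A^k x0`, the Hankel matrix factors as `O_N E` with
`E = [x0, Ax0, …, A^{T-N} x0]`, and for a feature map `R` one gets `W = R O_N E` and
`W⃗ = R O_N A E`. When `N ≥ ν`, `ker O_N = ker O_{N+1}` is `A`-invariant, so if `R` is injective on
the column space of `O_N E`, then `W z = 0` forces `O_N E z = 0`, hence `O_N A E z = 0` and
`W⃗ z = 0`: thus `W⃗` factors through `W`. When `T - N + 1 ≥ μ(x0)`, every state `A^k x0` is some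
`E z`, so that `w(k) = W z` and `w(k+1) = W⃗ z`, and `M W = W⃗` propagates to all times.
-/

section Algebra

theorem apply_succ_eq_of_sInf_stable_le {α : Type*} {f : ℕ → α} {N : ℕ}
    (hstable : ∃ i, ∀ j, f (i + j) = f i) (hN : sInf {i | ∀ j, f (i + j) = f i} ≤ N) :
    f (N + 1) = f N := by
  have hmin : ∀ j, f (sInf {i | ∀ j, f (i + j) = f i} + j) = f (sInf {i | ∀ j, f (i + j) = f i}) :=
    Nat.sInf_mem hstable
  obtain ⟨d, rfl⟩ := Nat.exists_eq_add_of_le hN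
  rw [add_assoc, hmin, hmin]

variable {K R m m' n : Type*} [Field K] [CommRing R] [Fintype n]

theorem pow_mem_span_pow_lt_card [DecidableEq n] [Nontrivial R] (A : Matrix n n R) (k : ℕ) :
    A ^ k ∈ Submodule.span R (Set.range fun i : Fin (Fintype.card n) => A ^ (i : ℕ)) := by
  rw [PowerBasis.mem_span_pow', A.pow_eq_aeval_mod_charpoly, ← A.charpoly_degree_eq_dim]
  exact ⟨_, Polynomial.degree_modByMonic_lt _ A.charpoly_monic, rfl⟩

theorem pow_mulVec_mem_span_card [DecidableEq n] [Nontrivial R] (A : Matrix n n R) (x : n → R)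
    (k : ℕ) :
    A ^ k *ᵥ x ∈
      Submodule.span R (Set.range fun i : Fin (Fintype.card n) => A ^ (i : ℕ) *ᵥ x) := by
  have h := Submodule.mem_map_of_mem (f := (Matrix.mulVecBilin R R).flip x)
    (pow_mem_span_pow_lt_card A k)
  rwa [Submodule.map_span, ← Set.range_comp] at h

theorem pow_mulVec_mem_span_of_mem_span [DecidableEq n] {A : Matrix n n R} {x : n → R} {L : ℕ}
    (hL : A ^ L *ᵥ x ∈ Submodule.span R (Set.range fun j : Fin L => A ^ (j : ℕ) *ᵥ x)) (k : ℕ) :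
    A ^ k *ᵥ x ∈ Submodule.span R (Set.range fun j : Fin L => A ^ (j : ℕ) *ᵥ x) := by
  set V := Submodule.span R (Set.range fun j : Fin L => A ^ (j : ℕ) *ᵥ x)
  have mem_of_le : ∀ j ≤ L, A ^ j *ᵥ x ∈ V := fun j hj =>
    hj.lt_or_eq.elim (fun hlt => Submodule.subset_span ⟨⟨j, hlt⟩, rfl⟩) (fun heq => heq ▸ hL)
  have invariant : V ≤ V.comap A.mulVecLin := by
    refine Submodule.span_le.2 ?_
    rintro _ ⟨j, rfl⟩
    simpa [pow_succ'] using mem_of_le (j + 1) j.2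
  induction k with
  | zero => exact mem_of_le 0 L.zero_le
  | succ k ih => simpa [pow_succ'] using invariant ih

theorem rank_eq_rank_iff_of_ker_mulVecLin_le {B : Matrix m n K} {D : Matrix m' n K}
    (hle : LinearMap.ker B.mulVecLin ≤ LinearMap.ker D.mulVecLin) :
    B.rank = D.rank ↔ LinearMap.ker B.mulVecLin = LinearMap.ker D.mulVecLin := by
  have hB : B.rank + _ = _ := B.mulVecLin.finrank_range_add_finrank_ker
  have hD : D.rank + _ = _ := D.mulVecLin.finrank_range_add_finrank_ker
  refine ⟨fun hrank => Submodule.eq_of_le_of_finrank_eq hle (by omega), fun hker => ?_⟩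
  rw [hker] at hB
  omega

theorem exists_mul_eq_of_ker_mulVecLin_le [Fintype m] {B : Matrix m n K} {D : Matrix m' n K}
    (hker : LinearMap.ker B.mulVecLin ≤ LinearMap.ker D.mulVecLin) :
    ∃ M : Matrix m' m K, M * B = D := by
  classical
  obtain ⟨g, hg⟩ := LinearMap.exists_extend
    ((LinearMap.ker B.mulVecLin).liftQ D.mulVecLin hker ∘ₗ
      B.mulVecLin.quotKerEquivRange.symm.toLinearMap)
  have hgB : ∀ v, g (B *ᵥ v) = D *ᵥ v := fun v =>
    (LinearMap.congr_fun hg ⟨B *ᵥ v, v, rfl⟩).trans <|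
      congrArg ((LinearMap.ker B.mulVecLin).liftQ D.mulVecLin hker)
        (B.mulVecLin.quotKerEquivRange_symm_apply_image v ⟨v, rfl⟩)
  refine ⟨LinearMap.toMatrix' g, Matrix.ext_of_mulVec_single fun j => ?_⟩
  rw [← Matrix.mulVec_mulVec, LinearMap.toMatrix'_mulVec, hgB]

theorem disjoint_ker_range_of_mul_eq_one [Fintype m] [DecidableEq n] {P : Matrix n m R}
    {S : Matrix m n R} (h : P * S = 1) :
    Disjoint (LinearMap.ker P.mulVecLin) (LinearMap.range S.mulVecLin) := by
  rw [Submodule.disjoint_def]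
  rintro _ hPS ⟨v, rfl⟩
  have hv : v = 0 := by simpa [h] using hPS
  simp [hv]

end Algebra

section Indices

variable {n p : ℕ} (A : Matrix (Fin n) (Fin n) ℝ) (C : Matrix (Fin p) (Fin n) ℝ) (x : Fin n → ℝ)

theorem range_excMat (L : ℕ) :
    LinearMap.range (excMat A x L).mulVecLin =
      Submodule.span ℝ (Set.range fun j : Fin L => A ^ (j : ℕ) *ᵥ x) :=
  Matrix.range_mulVecLin _

theorem range_excMat_mono : Monotone fun L => LinearMap.range (excMat A x L).mulVecLin := by
  intro L L' hle
  simp only [range_excMat]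
  refine Submodule.span_mono ?_
  rintro _ ⟨j, rfl⟩
  exact ⟨Fin.castLE hle j, rfl⟩

theorem rank_excMat_add (j : ℕ) : (excMat A x (n + j)).rank = (excMat A x n).rank := by
  have hrange : LinearMap.range (excMat A x (n + j)).mulVecLin =
      LinearMap.range (excMat A x n).mulVecLin := by
    refine le_antisymm ?_ (range_excMat_mono A x (Nat.le_add_right n j))
    rw [range_excMat, range_excMat, Submodule.span_le]
    rintro _ ⟨k, rfl⟩
    have hk := pow_mulVec_mem_span_card A x k
    rwa [Fintype.card_fin] at hk
  rw [Matrix.rank, Matrix.rank, hrange]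

-- The supremum over all states is a true maximum (not the junk value `0` of an unbounded `sSup`)
-- because Cayley–Hamilton gives `μ(v) ≤ n` for every `v`.
theorem excIndexAt_le_excIndex : excIndexAt A x ≤ excIndex A := by
  refine le_csSup ⟨n, ?_⟩ ⟨x, rfl⟩
  rintro _ ⟨v, rfl⟩
  exact Nat.sInf_le (rank_excMat_add A v)

theorem pow_mulVec_mem_span_of_excIndexAt_le {A : Matrix (Fin n) (Fin n) ℝ} {x : Fin n → ℝ} {L : ℕ}
    (hL : excIndexAt A x ≤ L) :
    A ^ L *ᵥ x ∈ Submodule.span ℝ (Set.range fun j : Fin L => A ^ (j : ℕ) *ᵥ x) := by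
  have hrank : (excMat A x (L + 1)).rank = (excMat A x L).rank :=
    apply_succ_eq_of_sInf_stable_le (f := fun i => (excMat A x i).rank) ⟨n, rank_excMat_add A x⟩ hL
  have hrange : LinearMap.range (excMat A x L).mulVecLin =
      LinearMap.range (excMat A x (L + 1)).mulVecLin :=
    Submodule.eq_of_le_of_finrank_eq (range_excMat_mono A x L.le_succ) hrank.symm
  rw [← range_excMat, hrange, range_excMat]
  exact Submodule.subset_span ⟨Fin.last L, rfl⟩

theorem obsMat_mulVec_apply (N : ℕ) (v : Fin n → ℝ) (i : Fin N) (r : Fin p) :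
    (obsMat A C N *ᵥ v) (i, r) = ((C * A ^ (i : ℕ)) *ᵥ v) r :=
  rfl

theorem obsMat_mulVec_eq_zero_iff {N : ℕ} {v : Fin n → ℝ} :
    obsMat A C N *ᵥ v = 0 ↔ ∀ i < N, (C * A ^ i) *ᵥ v = 0 :=
  ⟨fun h i hi => funext fun r => congrFun h (⟨i, hi⟩, r),
    fun h => funext fun ir => congrFun (h ir.1 ir.1.2) ir.2⟩

theorem ker_obsMat_antitone : Antitone fun N => LinearMap.ker (obsMat A C N).mulVecLin := by
  intro N N' hle v
  simp only [LinearMap.mem_ker, Matrix.mulVecLin_apply, obsMat_mulVec_eq_zero_iff]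
  exact fun hv i hi => hv i (hi.trans_le hle)

theorem exists_rank_obsMat_stable :
    ∃ N, ∀ j, (obsMat A C (N + j)).rank = (obsMat A C N).rank := by
  obtain ⟨N, hN⟩ := IsArtinian.monotone_stabilizes ⟨_, (ker_obsMat_antitone A C).dual_right⟩
  refine ⟨N, fun j => (rank_eq_rank_iff_of_ker_mulVecLin_le
    (ker_obsMat_antitone A C (Nat.le_add_right N j))).2 ?_⟩
  exact (hN (N + j) (Nat.le_add_right N j)).symm

theorem obsMat_mulVec_mulVec_eq_zero {A : Matrix (Fin n) (Fin n) ℝ} {C : Matrix (Fin p) (Fin n) ℝ}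
    {N : ℕ} (hN : obsIndex A C ≤ N) {v : Fin n → ℝ} (hv : obsMat A C N *ᵥ v = 0) :
    obsMat A C N *ᵥ (A *ᵥ v) = 0 := by
  have hrank : (obsMat A C (N + 1)).rank = (obsMat A C N).rank :=
    apply_succ_eq_of_sInf_stable_le (f := fun i => (obsMat A C i).rank)
      (exists_rank_obsMat_stable A C) hN
  have hker := (rank_eq_rank_iff_of_ker_mulVecLin_le (ker_obsMat_antitone A C N.le_succ)).1 hrank
  have hv' : obsMat A C (N + 1) *ᵥ v = 0 := hker.ge hv
  rw [obsMat_mulVec_eq_zero_iff] at hv' ⊢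
  intro i hi
  rw [Matrix.mulVec_mulVec, Matrix.mul_assoc, ← pow_succ]
  exact hv' (i + 1) (Nat.succ_lt_succ hi)

theorem nomStack_eq (N k : ℕ) : nomStack A C x N k = obsMat A C N *ᵥ (A ^ k *ᵥ x) := by
  ext ⟨i, r⟩
  rw [obsMat_mulVec_apply, Matrix.mulVec_mulVec, Matrix.mul_assoc, ← pow_add, add_comm]
  rfl

theorem range_hankelMat (N T : ℕ) :
    LinearMap.range (hankelMat A C x N T).mulVecLin =
      Submodule.span ℝ
        (Set.range fun j : Fin (T - N + 1) => obsMat A C N *ᵥ (A ^ (j : ℕ) *ᵥ x)) := by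
  simp only [← nomStack_eq]
  exact Matrix.range_mulVecLin _

end Indices

theorem data_driven_feature_space_dynamics_general {K m n q : Type*} [Field K] [Fintype m]
    [Fintype n] [DecidableEq n] [Fintype q] (A : Matrix n n K) (O : Matrix m n K) (x0 : n → K)
    (L : ℕ) (hO : ∀ v, O *ᵥ v = 0 → O *ᵥ (A *ᵥ v) = 0)
    (hx0 : A ^ L *ᵥ x0 ∈ Submodule.span K (Set.range fun j : Fin L => A ^ (j : ℕ) *ᵥ x0))
    (R : Matrix q m K)
    (hR : Disjoint (LinearMap.ker R.mulVecLin)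
      (Submodule.span K (Set.range fun j : Fin L => O *ᵥ (A ^ (j : ℕ) *ᵥ x0))))
    (w : ℕ → q → K) (hw : ∀ k, w k = R *ᵥ (O *ᵥ (A ^ k *ᵥ x0)))
    (W Wvec : Matrix q (Fin L) K)
    (hW : ∀ i j, W i j = w (j : ℕ) i) (hWvec : ∀ i j, Wvec i j = w ((j : ℕ) + 1) i) :
    (∃ M : Matrix q q K, M * W = Wvec) ∧
    (∀ M : Matrix q q K, M * W = Wvec → ∀ k, w (k + 1) = M *ᵥ w k) := by
  let E : Matrix n (Fin L) K := Matrix.of fun i j => (A ^ (j : ℕ) *ᵥ x0) i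
  have hWE : ∀ z, W *ᵥ z = R *ᵥ (O *ᵥ (E *ᵥ z)) := by
    suffices W = R * (O * E) by simp [this]
    ext i j
    rw [hW, hw]
    rfl
  have hWvecE : ∀ z, Wvec *ᵥ z = R *ᵥ (O *ᵥ (A *ᵥ (E *ᵥ z))) := by
    suffices Wvec = R * (O * (A * E)) by simp [this]
    ext i j
    rw [hWvec, hw, pow_succ', ← Matrix.mulVec_mulVec]
    rfl
  refine ⟨exists_mul_eq_of_ker_mulVecLin_le fun z hz => ?_, fun M hM k => ?_⟩
  · have hmem : O *ᵥ (E *ᵥ z) ∈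
        Submodule.span K (Set.range fun j : Fin L => O *ᵥ (A ^ (j : ℕ) *ᵥ x0)) :=
      (Matrix.range_mulVecLin (O * E)).le ⟨z, by simp⟩
    have hOE : O *ᵥ (E *ᵥ z) = 0 :=
      Submodule.disjoint_def.1 hR _ ((hWE z).symm.trans hz) hmem
    change Wvec *ᵥ z = 0
    rw [hWvecE, hO _ hOE, Matrix.mulVec_zero]
  · obtain ⟨z, hz⟩ : ∃ z, E *ᵥ z = A ^ k *ᵥ x0 :=
      (Matrix.range_mulVecLin E).ge (pow_mulVec_mem_span_of_mem_span hx0 k)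
    calc
      w (k + 1) = Wvec *ᵥ z := by rw [hw, hWvecE, hz, Matrix.mulVec_mulVec x0 A, ← pow_succ']
      _ = M *ᵥ (W *ᵥ z) := by rw [← hM, Matrix.mulVec_mulVec]
      _ = M *ᵥ w k := by rw [hWE, hz, hw]

/-- **Data-driven feature space dynamics.** For `N ≥ ν` and `T ≥ N + μ − 1`, if `S` has
orthonormal columns spanning `Col Y_{N,T}`, `w(k) = Sᵀ y_{k:k+N-1}`,
`W = [w(0), …, w(T−N)]` and `W⃗ = [w(1), …, w(T−N+1)]`, then there exists `M` with
`M W = W⃗` (so `min_M ‖W⃗ − M W‖_F = 0`), and every `M` with `M W = W⃗` satisfies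
`w(k+1) = M w(k)` for all `k ∈ ℕ`. -/
theorem data_driven_feature_space_dynamics {n p q : ℕ}
    (A : Matrix (Fin n) (Fin n) ℝ) (C : Matrix (Fin p) (Fin n) ℝ) (x0 : Fin n → ℝ)
    (N T : ℕ) (hN : obsIndex A C ≤ N) (hT : N + excIndex A - 1 ≤ T)
    (S : Matrix (Fin N × Fin p) (Fin q) ℝ)
    (hortho : Sᵀ * S = 1)
    (hcol : LinearMap.range S.mulVecLin = LinearMap.range (hankelMat A C x0 N T).mulVecLin)
    (w : ℕ → Fin q → ℝ)
    (hw : ∀ k : ℕ, w k = Sᵀ.mulVec (nomStack A C x0 N k))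
    (W Wvec : Matrix (Fin q) (Fin (T - N + 1)) ℝ)
    (hW : ∀ i j, W i j = w (j : ℕ) i)
    (hWvec : ∀ i j, Wvec i j = w ((j : ℕ) + 1) i) :
    (∃ M : Matrix (Fin q) (Fin q) ℝ, M * W = Wvec) ∧
    (∀ M : Matrix (Fin q) (Fin q) ℝ, M * W = Wvec →
      ∀ k : ℕ, w (k + 1) = M.mulVec (w k)) := by
  have hL : excIndexAt A x0 ≤ T - N + 1 := (excIndexAt_le_excIndex A x0).trans (by omega)
  exact data_driven_feature_space_dynamics_general A (obsMat A C N) x0 (T - N + 1)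
    (fun _ => obsMat_mulVec_mulVec_eq_zero hN) (pow_mulVec_mem_span_of_excIndexAt_le hL) Sᵀ
    (range_hankelMat A C x0 N T ▸ hcol ▸ disjoint_ker_range_of_mul_eq_one hortho) w
    (fun k => by rw [hw, nomStack_eq]) W Wvec hW hWvec
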